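/- Case (0,1,0) of Inverse_L completeness: For typed ASP λ-calculus formulas H and G in β-normal form where H has order 0 and G has order 0, if there exists a typed ASP λ-calculus formula F of order 1 in β-normal form with H = F @ G, then Inverse_L(H,G) returns a non-null formula F' with H = F' @ G. -/

import Mathlib

/- Typed Answer Set Programming lambda calculus (Baral, Dzifcak, Gonzalez, Gottesman).

   Base types: e (terms), a (atoms), l (literals), g (gen-literals),
   d (bodies), h (heads), t (satisfiability values).  Terms are de Bruijn
   lambda terms over ASP connectives; function and predicate symbols are
   constants of iterated arrow type applied via `app`. -/

namespace ASPLambda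

inductive BTy : Type
  | e | a | l | g | d | h | t
deriving DecidableEq, Repr

inductive Ty : Type
  | base : BTy → Ty
  | arrow : Ty → Ty → Ty
deriving DecidableEq, Repr

/-- The order of a type: base types have order 0,
    `order (A → B) = max (order A + 1) (order B)`. -/
def Ty.order : Ty → ℕ
  | .base _ => 0
  | .arrow A B => max (A.order + 1) B.order

/-- Iterated arrow type `A → ⋯ → A → B` with `n` arguments. -/
def Ty.arrN : ℕ → Ty → Ty → Ty
  | 0, _, B => B
  | n + 1, A, B => .arrow A (Ty.arrN n A B)

/-- ASP typed terms (de Bruijn representation).  `neg` is classical negation ¬,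
    `naf` is negation as failure (not), `disj` is `or`, `conj` is `,`,
    `rule h b` is `h ← b.`, `ruleH h` is `h ←.`, `ruleB b` is `← b.`,
    and `seq` juxtaposes rules/programs. -/
inductive Tm : Type
  | var : ℕ → Tm
  | const : String → Ty → Tm
  | app : Tm → Tm → Tm
  | lam : Ty → Tm → Tm
  | neg : Tm → Tm
  | naf : Tm → Tm
  | disj : Tm → Tm → Tm
  | conj : Tm → Tm → Tm
  | rule : Tm → Tm → Tm
  | ruleH : Tm → Tm
  | ruleB : Tm → Tm
  | seq : Tm → Tm → Tm
deriving DecidableEq, Repr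

namespace Tm

/-- de Bruijn shift by `dpl` of indices ≥ `c`. -/
def shift (dpl c : ℕ) : Tm → Tm
  | .var n => if n < c then .var n else .var (n + dpl)
  | .const s A => .const s A
  | .app f x => .app (f.shift dpl c) (x.shift dpl c)
  | .lam A b => .lam A (b.shift dpl (c + 1))
  | .neg x => .neg (x.shift dpl c)
  | .naf x => .naf (x.shift dpl c)
  | .disj x y => .disj (x.shift dpl c) (y.shift dpl c)
  | .conj x y => .conj (x.shift dpl c) (y.shift dpl c)
  | .rule x y => .rule (x.shift dpl c) (y.shift dpl c)
  | .ruleH x => .ruleH (x.shift dpl c)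
  | .ruleB x => .ruleB (x.shift dpl c)
  | .seq x y => .seq (x.shift dpl c) (y.shift dpl c)

/-- Substitution of `s` for de Bruijn index `j` (decrementing higher indices). -/
def subst : ℕ → Tm → Tm → Tm
  | j, s, .var n => if n = j then s else if j < n then .var (n - 1) else .var n
  | _, _, .const c A => .const c A
  | j, s, .app f x => .app (subst j s f) (subst j s x)
  | j, s, .lam A b => .lam A (subst (j + 1) (s.shift 1 0) b)
  | j, s, .neg x => .neg (subst j s x)
  | j, s, .naf x => .naf (subst j s x)
  | j, s, .disj x y => .disj (subst j s x) (subst j s y)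
  | j, s, .conj x y => .conj (subst j s x) (subst j s y)
  | j, s, .rule x y => .rule (subst j s x) (subst j s y)
  | j, s, .ruleH x => .ruleH (subst j s x)
  | j, s, .ruleB x => .ruleB (subst j s x)
  | j, s, .seq x y => .seq (subst j s x) (subst j s y)

/-- Whether the de Bruijn index `k` occurs free. -/
def hasFree (k : ℕ) : Tm → Bool
  | .var n => n == k
  | .const _ _ => false
  | .app f x => f.hasFree k || x.hasFree k
  | .lam _ b => b.hasFree (k + 1)
  | .neg x => x.hasFree k
  | .naf x => x.hasFree k
  | .disj x y => x.hasFree k || y.hasFree k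
  | .conj x y => x.hasFree k || y.hasFree k
  | .rule x y => x.hasFree k || y.hasFree k
  | .ruleH x => x.hasFree k
  | .ruleB x => x.hasFree k
  | .seq x y => x.hasFree k || y.hasFree k

/-- Every abstractor binds (at least one occurrence of) its variable (λI condition). -/
def lamI : Tm → Bool
  | .var _ => true
  | .const _ _ => true
  | .app f x => f.lamI && x.lamI
  | .lam _ b => b.lamI && b.hasFree 0
  | .neg x => x.lamI
  | .naf x => x.lamI
  | .disj x y => x.lamI && y.lamI
  | .conj x y => x.lamI && y.lamI
  | .rule x y => x.lamI && y.lamI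
  | .ruleH x => x.lamI
  | .ruleB x => x.lamI
  | .seq x y => x.lamI && y.lamI

/-- A λ-term in the sense of the signature: a variable or a constant. -/
def isVarOrConst : Tm → Bool
  | .var _ => true
  | .const _ _ => true
  | _ => false

/-- Contains no lambda abstractor. -/
def noLam : Tm → Bool
  | .var _ => true
  | .const _ _ => true
  | .app f x => f.noLam && x.noLam
  | .lam _ _ => false
  | .neg x => x.noLam
  | .naf x => x.noLam
  | .disj x y => x.noLam && y.noLam
  | .conj x y => x.noLam && y.noLam
  | .rule x y => x.noLam && y.noLam
  | .ruleH x => x.noLam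
  | .ruleB x => x.noLam
  | .seq x y => x.noLam && y.noLam

/-- The head of an application spine is a variable. -/
def headIsVar : Tm → Bool
  | .var _ => true
  | .app f _ => f.headIsVar
  | _ => false

/-- Contains no application whose head is a (bound) variable. -/
def noVarApp : Tm → Bool
  | .var _ => true
  | .const _ _ => true
  | .app f x => !(f.headIsVar) && f.noVarApp && x.noVarApp
  | .lam _ b => b.noVarApp
  | .neg x => x.noVarApp
  | .naf x => x.noVarApp
  | .disj x y => x.noVarApp && y.noVarApp
  | .conj x y => x.noVarApp && y.noVarApp
  | .rule x y => x.noVarApp && y.noVarApp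
  | .ruleH x => x.noVarApp
  | .ruleB x => x.noVarApp
  | .seq x y => x.noVarApp && y.noVarApp

/-- Number of symbols of a formula (its size). -/
def size : Tm → ℕ
  | .var _ => 1
  | .const _ _ => 1
  | .app f x => f.size + x.size + 1
  | .lam _ b => b.size + 1
  | .neg x => x.size + 1
  | .naf x => x.size + 1
  | .disj x y => x.size + y.size + 1
  | .conj x y => x.size + y.size + 1
  | .rule x y => x.size + y.size + 1
  | .ruleH x => x.size + 1
  | .ruleB x => x.size + 1
  | .seq x y => x.size + y.size + 1

/-- Number of lambda abstractors; in a formula (where every abstractor binds a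
    variable and every variable is bound) this is the number of variables. -/
def numAbs : Tm → ℕ
  | .var _ => 0
  | .const _ _ => 0
  | .app f x => f.numAbs + x.numAbs
  | .lam _ b => b.numAbs + 1
  | .neg x => x.numAbs
  | .naf x => x.numAbs
  | .disj x y => x.numAbs + y.numAbs
  | .conj x y => x.numAbs + y.numAbs
  | .rule x y => x.numAbs + y.numAbs
  | .ruleH x => x.numAbs
  | .ruleB x => x.numAbs
  | .seq x y => x.numAbs + y.numAbs

/-- Replacement `t(A : B)`: replace every occurrence of `A` in `t` by `B`
    (shifting under binders). -/
def replace : Tm → Tm → Tm → Tm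
  | .var n, A, B => if Tm.var n = A then B else .var n
  | .const s T, A, B => if Tm.const s T = A then B else .const s T
  | .app f x, A, B => if Tm.app f x = A then B else .app (f.replace A B) (x.replace A B)
  | .lam T b, A, B => if Tm.lam T b = A then B else .lam T (b.replace (A.shift 1 0) (B.shift 1 0))
  | .neg x, A, B => if Tm.neg x = A then B else .neg (x.replace A B)
  | .naf x, A, B => if Tm.naf x = A then B else .naf (x.replace A B)
  | .disj x y, A, B => if Tm.disj x y = A then B else .disj (x.replace A B) (y.replace A B)
  | .conj x y, A, B => if Tm.conj x y = A then B else .conj (x.replace A B) (y.replace A B)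
  | .rule x y, A, B => if Tm.rule x y = A then B else .rule (x.replace A B) (y.replace A B)
  | .ruleH x, A, B => if Tm.ruleH x = A then B else .ruleH (x.replace A B)
  | .ruleB x, A, B => if Tm.ruleB x = A then B else .ruleB (x.replace A B)
  | .seq x y, A, B => if Tm.seq x y = A then B else .seq (x.replace A B) (y.replace A B)

/-- Simultaneous sequential replacement `t(A₁,…,Aₙ : B₁,…,Bₙ)`. -/
def replaceList : Tm → List (Tm × Tm) → Tm
  | t, [] => t
  | t, (A, B) :: r => (t.replace A B).replaceList r

/-- Iterated abstraction `λv₁ … λvₙ. b`. -/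
def lams : List Ty → Tm → Tm
  | [], b => b
  | A :: r, b => .lam A (Tm.lams r b)

/-- Iterated application `f @ x₁ @ ⋯ @ xₙ`. -/
def apps : Tm → List Tm → Tm
  | f, [] => f
  | f, x :: r => Tm.apps (.app f x) r

end Tm

/-- Typing relation for ASP typed terms (Definition "ASP Typed Term").
    The coercion rules carry the side condition that the coerced term
    is not a λ-term (i.e. not a variable or constant). -/
inductive HasType : List Ty → Tm → Ty → Prop
  | var {Γ n A} : Γ[n]? = some A → HasType Γ (.var n) A
  | const {Γ s A} : HasType Γ (.const s A) A
  | app {Γ f x A B} : HasType Γ f (.arrow A B) → HasType Γ x A → HasType Γ (.app f x) B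
  | lam {Γ b A B} : HasType (A :: Γ) b B → HasType Γ (.lam A b) (.arrow A B)
  | atomLit {Γ x} : HasType Γ x (.base .a) → x.isVarOrConst = false → HasType Γ x (.base .l)
  | negLit {Γ x} : HasType Γ x (.base .a) → HasType Γ (.neg x) (.base .l)
  | litGen {Γ x} : HasType Γ x (.base .l) → x.isVarOrConst = false → HasType Γ x (.base .g)
  | nafGen {Γ x} : HasType Γ x (.base .l) → HasType Γ (.naf x) (.base .g)
  | litHead {Γ x} : HasType Γ x (.base .l) → x.isVarOrConst = false → HasType Γ x (.base .h)
  | disj {Γ x y} : HasType Γ x (.base .h) → HasType Γ y (.base .h) →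
      HasType Γ (.disj x y) (.base .h)
  | genBody {Γ x} : HasType Γ x (.base .g) → x.isVarOrConst = false → HasType Γ x (.base .d)
  | conj {Γ x y} : HasType Γ x (.base .d) → HasType Γ y (.base .d) →
      HasType Γ (.conj x y) (.base .d)
  | rule {Γ x y} : HasType Γ x (.base .h) → HasType Γ y (.base .d) →
      HasType Γ (.rule x y) (.base .t)
  | ruleH {Γ x} : HasType Γ x (.base .h) → HasType Γ (.ruleH x) (.base .t)
  | ruleB {Γ y} : HasType Γ y (.base .d) → HasType Γ (.ruleB y) (.base .t)
  | seq {Γ x y} : HasType Γ x (.base .t) → HasType Γ y (.base .t) →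
      HasType Γ (.seq x y) (.base .t)

/-- A typed ASP λ-calculus formula of type `A`: a closed well-typed ASP term
    in which every abstractor binds a variable. -/
structure IsFormula (t : Tm) (A : Ty) : Prop where
  typed : HasType [] t A
  lamI : t.lamI = true

/-- One step of β-reduction (with congruence through all constructors). -/
inductive Step : Tm → Tm → Prop
  | beta {A b x} : Step (.app (.lam A b) x) (Tm.subst 0 x b)
  | appL {f f' x} : Step f f' → Step (.app f x) (.app f' x)
  | appR {f x x'} : Step x x' → Step (.app f x) (.app f x')
  | lam {A b b'} : Step b b' → Step (.lam A b) (.lam A b')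
  | neg {x x'} : Step x x' → Step (.neg x) (.neg x')
  | naf {x x'} : Step x x' → Step (.naf x) (.naf x')
  | disjL {x x' y} : Step x x' → Step (.disj x y) (.disj x' y)
  | disjR {x y y'} : Step y y' → Step (.disj x y) (.disj x y')
  | conjL {x x' y} : Step x x' → Step (.conj x y) (.conj x' y)
  | conjR {x y y'} : Step y y' → Step (.conj x y) (.conj x y')
  | ruleL {x x' y} : Step x x' → Step (.rule x y) (.rule x' y)
  | ruleR {x y y'} : Step y y' → Step (.rule x y) (.rule x y')
  | ruleH {x x'} : Step x x' → Step (.ruleH x) (.ruleH x')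
  | ruleB {x x'} : Step x x' → Step (.ruleB x) (.ruleB x')
  | seqL {x x' y} : Step x x' → Step (.seq x y) (.seq x' y)
  | seqR {x y y'} : Step y y' → Step (.seq x y) (.seq x y')

/-- Multi-step β-reduction. -/
abbrev Steps : Tm → Tm → Prop := Relation.ReflTransGen Step

/-- β-normal form: no β-redex occurrences, i.e. no step is possible. -/
def Tm.IsNormal (t : Tm) : Prop := ∀ u, ¬ Step t u

/-- `N` is the β-normal form of `M`. -/
def NormalizesTo (M N : Tm) : Prop := Steps M N ∧ N.IsNormal

/-- `Occurs P Q`: the term `P` occurs in `Q` (`P` is a sub-term of `Q`). -/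
inductive Occurs : Tm → Tm → Prop
  | refl (t : Tm) : Occurs t t
  | appL {P M N} : Occurs P M → Occurs P (.app M N)
  | appR {P M N} : Occurs P N → Occurs P (.app M N)
  | lam {P A M} : Occurs P M → Occurs P (.lam A M)
  | neg {P M} : Occurs P M → Occurs P (.neg M)
  | naf {P M} : Occurs P M → Occurs P (.naf M)
  | disjL {P M N} : Occurs P M → Occurs P (.disj M N)
  | disjR {P M N} : Occurs P N → Occurs P (.disj M N)
  | conjL {P M N} : Occurs P M → Occurs P (.conj M N)
  | conjR {P M N} : Occurs P N → Occurs P (.conj M N)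
  | ruleL {P M N} : Occurs P M → Occurs P (.rule M N)
  | ruleR {P M N} : Occurs P N → Occurs P (.rule M N)
  | ruleH {P M} : Occurs P M → Occurs P (.ruleH M)
  | ruleB {P M} : Occurs P M → Occurs P (.ruleB M)
  | seqL {P M N} : Occurs P M → Occurs P (.seq M N)
  | seqR {P M N} : Occurs P N → Occurs P (.seq M N)

/-- The `Inverse_L` algorithm, as a relation: `InvL H G F` holds exactly when
    one of the four cases of `Inverse_L(H,G)` applies and produces the
    (non-null) output `F`.  Variables `v₁,…,v_s` are represented by de Bruijn
    indices: under binders `λv₁…λv_s`, the variable `v_k` is index `s - k`. -/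
inductive InvL : Tm → Tm → Tm → Prop
  | case1 (H : Tm) (A : Ty) :
      InvL H (.lam A (.var 0)) (.lam (.arrow A A) (.app (.var 0) (H.shift 1 0)))
  | case2 (H G : Tm) (A : Ty) :
      Occurs G H → HasType [] G A →
      InvL H G (.lam A ((H.shift 1 0).replace (G.shift 1 0) (.var 0)))
  | case3 (H G : Tm) (W : Ty) (Js : List (Tm × List Tm)) (tys : List Ty)
      (ks : List ℕ) (s m : ℕ) :
      (∀ A : Ty, G ≠ .lam A (.var 0)) →
      Js ≠ [] →
      tys.length = s → 1 ≤ s → s ≤ m → ks.length = m →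
      (∀ k ∈ ks, 1 ≤ k ∧ k ≤ s) →
      (∀ Ja ∈ Js, Ja.2.length = m ∧ Occurs Ja.1 H ∧ (∀ x ∈ Ja.2, Occurs x Ja.1) ∧
        G = Tm.lams tys ((Ja.1.shift s 0).replaceList
              ((Ja.2.map (fun x => x.shift s 0)).zip
                (ks.map (fun k => Tm.var (s - k)))))) →
      InvL H G (.lam W ((H.shift 1 0).replaceList
        (Js.map (fun Ja => (Ja.1.shift 1 0,
          Tm.apps (.var 0) (ks.map (fun k => (Ja.2.getD (k - 1) Ja.1).shift 1 0)))))))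
  | case4 (H G : Tm) (W W' : Ty) (tysI tysS : List Ty) (J J1 : Tm)
      (args : List Tm) (ks : List ℕ) (i s : ℕ) :
      tysI.length = i → tysS.length = s - i → i < s →
      args.length = s - i → ks.length = s - i →
      (∀ k ∈ ks, i + 1 ≤ k ∧ k ≤ s) →
      H = Tm.lams tysI J →
      Occurs J1 J → (∀ x ∈ args, Occurs x J1) →
      G = .lam W ((J.shift 1 0).replace (J1.shift 1 0)
            (Tm.apps (.var 0) (ks.map (fun k => (args.getD (k - i - 1) J1).shift 1 0)))) →
      InvL H G (.lam W' (Tm.lams tysI (.app (.var i)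
        (Tm.lams tysS ((J1.shift (s + 1) 0).replaceList
          ((args.map (fun x => x.shift (s + 1) 0)).zip
            (ks.map (fun k => Tm.var (s - k)))))))))

/-- The `Inverse_R` algorithm, as a relation: `InvR H G F` holds exactly when
    one of the four cases of `Inverse_R(H,G)` applies and produces the
    (non-null) output `F`. -/
inductive InvR : Tm → Tm → Tm → Prop
  | case1 (H G J F : Tm) (A : Ty) :
      G = .lam A (.app (.var 0) (J.shift 1 0)) →
      InvL H J F → InvR H G F
  | case2 (H G J : Tm) (A : Ty) :
      Occurs J H → HasType [] J A →
      G = .lam A ((H.shift 1 0).replace (J.shift 1 0) (.var 0)) →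
      InvR H G J
  | case3 (H G : Tm) (W : Ty) (Js : List (Tm × List Tm)) (tys : List Ty)
      (ks : List ℕ) (s m : ℕ) (J1 : Tm) (args1 : List Tm) :
      (∀ (A : Ty) (J : Tm), G ≠ .lam A (.app (.var 0) (J.shift 1 0))) →
      Js ≠ [] → Js.head? = some (J1, args1) →
      tys.length = s → 1 ≤ s → s ≤ m → ks.length = m →
      (∀ k ∈ ks, 1 ≤ k ∧ k ≤ m) →
      (∀ Ja ∈ Js, Ja.2.length = m ∧ Occurs Ja.1 H ∧ (∀ x ∈ Ja.2, Occurs x Ja.1)) →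
      G = .lam W ((H.shift 1 0).replaceList
        (Js.map (fun Ja => (Ja.1.shift 1 0,
          Tm.apps (.var 0) (ks.map (fun k => (Ja.2.getD (k - 1) Ja.1).shift 1 0)))))) →
      InvR H G (Tm.lams tys ((J1.shift s 0).replaceList
        ((args1.map (fun x => x.shift s 0)).zip (ks.map (fun k => Tm.var (s - k))))))
  | case4 (H G : Tm) (W W' : Ty) (tysI tysS : List Ty) (J J1 : Tm)
      (args : List Tm) (ks : List ℕ) (i s : ℕ) :
      tysI.length = i → tysS.length = s - i → i < s →
      args.length = s - i → ks.length = s - i →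
      (∀ k ∈ ks, i + 1 ≤ k ∧ k ≤ s) →
      H = Tm.lams tysI J →
      Occurs J1 J → (∀ x ∈ args, Occurs x J1) →
      G = .lam W (Tm.lams tysI (.app (.var i)
        (Tm.lams tysS ((J1.shift (s + 1) 0).replaceList
          ((args.map (fun x => x.shift (s + 1) 0)).zip
            (ks.map (fun k => Tm.var (s - k)))))))) →
      InvR H G (.lam W' ((J.shift 1 0).replace (J1.shift 1 0)
        (Tm.apps (.var 0) (ks.map (fun k => (args.getD (k - i - 1) J1).shift 1 0)))))

/-! ### The Answer Set Programming language proper -/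

/-- ASP terms: constants, or function symbols applied to terms. -/
inductive ASPTerm : Tm → Prop
  | const (s : String) : ASPTerm (.const s (.base .e))
  | fn (f : String) (args : List Tm) :
      args ≠ [] → (∀ x ∈ args, ASPTerm x) →
      ASPTerm (Tm.apps (.const f (Ty.arrN args.length (.base .e) (.base .e))) args)

/-- ASP atoms: predicate symbols applied to terms. -/
inductive ASPAtom : Tm → Prop
  | pred (p : String) (args : List Tm) :
      (∀ x ∈ args, ASPTerm x) →
      ASPAtom (Tm.apps (.const p (Ty.arrN args.length (.base .e) (.base .a))) args)

/-- ASP literals: atoms or negated atoms. -/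
inductive ASPLit : Tm → Prop
  | atom {x} : ASPAtom x → ASPLit x
  | neg {x} : ASPAtom x → ASPLit (.neg x)

/-- ASP gen-literals: literals or naf-literals. -/
inductive ASPGen : Tm → Prop
  | lit {x} : ASPLit x → ASPGen x
  | naf {x} : ASPLit x → ASPGen (.naf x)

/-- Heads of ASP rules: `or`-connected literals. -/
inductive ASPHead : Tm → Prop
  | lit {x} : ASPLit x → ASPHead x
  | disj {x y} : ASPHead x → ASPHead y → ASPHead (.disj x y)

/-- Bodies of ASP rules: `,`-connected gen-literals. -/
inductive ASPBody : Tm → Prop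
  | gen {x} : ASPGen x → ASPBody x
  | conj {x y} : ASPBody x → ASPBody y → ASPBody (.conj x y)

/-- ASP rules `L₀ or … or L_k ← L_{k+1},…, not L_n.` (including facts and
    constraints). -/
inductive ASPRule : Tm → Prop
  | mk {h b} : ASPHead h → ASPBody b → ASPRule (.rule h b)
  | fact {h} : ASPHead h → ASPRule (.ruleH h)
  | constr {b} : ASPBody b → ASPRule (.ruleB b)

/-- ASP programs: `.`-separated sequences of ASP rules. -/
inductive ASPProg : Tm → Prop
  | single {r} : ASPRule r → ASPProg r
  | seq {x y} : ASPProg x → ASPProg y → ASPProg (.seq x y)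

/-- Expressions of the ASP language, by base type. -/
def ASPExpr (M : Tm) : BTy → Prop
  | .e => ASPTerm M
  | .a => ASPAtom M
  | .l => ASPLit M
  | .g => ASPGen M
  | .h => ASPHead M
  | .d => ASPBody M
  | .t => ASPProg M


/-!
A β-normal `F` with `F @ G = H` is either not an abstraction, so that `H` is the application `F @ G`
itself, or an abstraction `λv.b` with `v` free in `b`.  In the latter case `b[v := G]` has no redex,
because `G` is normal and not an abstraction, and hence is `H`.  Either way `G` occurs in `H`, so
case 2 of `Inverse_L` applies; its output `λv.H(G:v)` maps `G` to `H` because putting the closed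
term `G` back for `v` undoes the replacement.
-/

/-- Closed terms, i.e. terms without free variables, encoded as the terms that no de Bruijn shift
changes: this is how closedness enters when substituting under binders. -/
def Tm.IsClosed (t : Tm) : Prop := ∀ d c, t.shift d c = t

namespace HasType

variable {Γ : List Ty} {t : Tm} {A : Ty}

theorem shift_eq_self (h : HasType Γ t A) (d : ℕ) {c : ℕ} (hc : Γ.length ≤ c) :
    t.shift d c = t := by
  induction h generalizing c with
  | var hn =>
    have hlt := (List.getElem?_eq_some_iff.mp hn).1
    exact if_pos (hlt.trans_le hc)
  | lam _ ih => exact congrArg _ (ih (Nat.succ_le_succ hc))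
  | _ => grind [Tm.shift]

theorem isClosed (h : HasType [] t A) : t.IsClosed :=
  fun d _ => h.shift_eq_self d (Nat.zero_le _)

theorem ne_lam_of_order_eq_zero (h : HasType Γ t A) (hA : A.order = 0) (T : Ty) (b : Tm) :
    t ≠ .lam T b := by
  induction h <;> grind [Ty.order]

end HasType

namespace Tm

theorem subst_shift (t s : Tm) (j : ℕ) : subst j s (t.shift 1 j) = t := by
  induction t generalizing s j with
  | var n => grind [shift, subst]
  | _ => simp_all only [shift, subst]

section Normal

variable {f x y : Tm} {n : ℕ} {s : String} {T : Ty}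

@[simp]
theorem isNormal_var : (var n).IsNormal := nofun

@[simp]
theorem isNormal_const : (const s T).IsNormal := nofun

@[simp]
theorem isNormal_lam : (lam T x).IsNormal ↔ x.IsNormal :=
  ⟨fun h _ hx => h _ (.lam hx), fun | h, _, .lam hx => h _ hx⟩

@[simp]
theorem isNormal_app :
    (app f x).IsNormal ↔ (∀ T b, f ≠ .lam T b) ∧ f.IsNormal ∧ x.IsNormal := by
  constructor
  · intro h
    refine ⟨?_, fun _ hf => h _ (.appL hf), fun _ hx => h _ (.appR hx)⟩
    rintro T b rfl
    exact h _ .beta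
  · rintro ⟨hlam, hf, hx⟩ _ (_ | hstep | hstep)
    exacts [hlam _ _ rfl, hf _ hstep, hx _ hstep]

@[simp]
theorem isNormal_neg : (neg x).IsNormal ↔ x.IsNormal :=
  ⟨fun h _ hx => h _ (.neg hx), fun | h, _, .neg hx => h _ hx⟩

@[simp]
theorem isNormal_naf : (naf x).IsNormal ↔ x.IsNormal :=
  ⟨fun h _ hx => h _ (.naf hx), fun | h, _, .naf hx => h _ hx⟩

@[simp]
theorem isNormal_ruleH : (ruleH x).IsNormal ↔ x.IsNormal :=
  ⟨fun h _ hx => h _ (.ruleH hx), fun | h, _, .ruleH hx => h _ hx⟩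

@[simp]
theorem isNormal_ruleB : (ruleB x).IsNormal ↔ x.IsNormal :=
  ⟨fun h _ hx => h _ (.ruleB hx), fun | h, _, .ruleB hx => h _ hx⟩

@[simp]
theorem isNormal_disj : (disj x y).IsNormal ↔ x.IsNormal ∧ y.IsNormal :=
  ⟨fun h => ⟨fun _ hx => h _ (.disjL hx), fun _ hy => h _ (.disjR hy)⟩,
    fun | h, _, .disjL hx => h.1 _ hx | h, _, .disjR hy => h.2 _ hy⟩

@[simp]
theorem isNormal_conj : (conj x y).IsNormal ↔ x.IsNormal ∧ y.IsNormal :=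
  ⟨fun h => ⟨fun _ hx => h _ (.conjL hx), fun _ hy => h _ (.conjR hy)⟩,
    fun | h, _, .conjL hx => h.1 _ hx | h, _, .conjR hy => h.2 _ hy⟩

@[simp]
theorem isNormal_rule : (rule x y).IsNormal ↔ x.IsNormal ∧ y.IsNormal :=
  ⟨fun h => ⟨fun _ hx => h _ (.ruleL hx), fun _ hy => h _ (.ruleR hy)⟩,
    fun | h, _, .ruleL hx => h.1 _ hx | h, _, .ruleR hy => h.2 _ hy⟩

@[simp]
theorem isNormal_seq : (seq x y).IsNormal ↔ x.IsNormal ∧ y.IsNormal :=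
  ⟨fun h => ⟨fun _ hx => h _ (.seqL hx), fun _ hy => h _ (.seqR hy)⟩,
    fun | h, _, .seqL hx => h.1 _ hx | h, _, .seqR hy => h.2 _ hy⟩

end Normal

section Substitution

variable {G : Tm}

theorem IsClosed.subst_self (hG : G.IsClosed) (j : ℕ) : subst j G G = G := by
  simpa only [hG 1 j] using subst_shift G G j

theorem IsClosed.subst_replace_var (hG : G.IsClosed) (t : Tm) (j : ℕ) :
    subst j G (t.replace G (.var j)) = subst j G t := by
  have hG_shift := hG 1 0
  have hG_subst := hG.subst_self
  have hvar_subst (i : ℕ) : subst i G (.var i) = G := if_pos rfl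
  induction t generalizing j with
  | lam T b ih =>
    have hvar_shift : (Tm.var j).shift 1 0 = .var (j + 1) := rfl
    simp only [replace, hG_shift, hvar_shift]
    split_ifs with h
    · rw [h, hvar_subst, hG_subst]
    · simp only [subst, hG_shift, ih]
  | _ =>
    simp only [replace]
    split_ifs with h
    · rw [h, hvar_subst, hG_subst]
    · simp_all only [subst]

theorem IsClosed.occurs_subst (hG : G.IsClosed) {b : Tm} {j : ℕ} (hb : b.hasFree j = true) :
    Occurs G (subst j G b) := by
  have hG_shift := hG 1 0
  induction b generalizing j <;> grind [subst, hasFree, Occurs]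

theorem subst_ne_lam {b : Tm} (hb : ∀ T c, b ≠ .lam T c) (hG : ∀ T c, G ≠ .lam T c) (j : ℕ)
    (T : Ty) (c : Tm) : subst j G b ≠ .lam T c := by
  cases b <;> grind [subst]

theorem IsNormal.subst {b : Tm} (hb : b.IsNormal) (hG : G.IsClosed) (hGnf : G.IsNormal)
    (hGlam : ∀ T c, G ≠ .lam T c) (j : ℕ) : (subst j G b).IsNormal := by
  induction b generalizing j with
  | var n =>
    simp only [Tm.subst]
    split_ifs
    exacts [hGnf, isNormal_var, isNormal_var]
  | lam T b ih =>
    rw [isNormal_lam] at hb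
    rw [Tm.subst, hG 1 0, isNormal_lam]
    exact ih hb _
  | app f x ihf ihx =>
    rw [isNormal_app] at hb
    rw [Tm.subst, isNormal_app]
    exact ⟨subst_ne_lam hb.1 hGlam j, ihf hb.2.1 j, ihx hb.2.2 j⟩
  | _ => simp_all [Tm.subst]

end Substitution

end Tm

section InverseL

variable {F G H : Tm}

theorem Tm.IsNormal.eq_of_steps {M N : Tm} (hM : M.IsNormal) (h : Steps M N) : N = M :=
  (Relation.reflTransGen_iff_eq hM).mp h

theorem NormalizesTo.occurs_arg (h : NormalizesTo (.app F G) H)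
    (hFlamI : F.lamI = true) (hFnf : F.IsNormal)
    (hG : G.IsClosed) (hGnf : G.IsNormal) (hGlam : ∀ T b, G ≠ .lam T b) : Occurs G H := by
  rcases h.1.cases_head with rfl | ⟨M, hstep, hrest⟩
  · exact .appR (.refl G)
  cases hstep with
  | @beta T b _ =>
    have hb_free : b.hasFree 0 = true := (Bool.and_eq_true_iff.mp hFlamI).2
    have hb_normal : b.IsNormal := Tm.isNormal_lam.mp hFnf
    have hH : H = Tm.subst 0 G b :=
      (hb_normal.subst hG hGnf hGlam 0).eq_of_steps hrest
    exact hH ▸ hG.occurs_subst hb_free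
  | appL hstep => exact absurd hstep (hFnf _)
  | appR hstep => exact absurd hstep (hGnf _)

theorem Tm.IsClosed.step_app_lam_replace (hG : G.IsClosed) (H : Tm) (B : Ty) :
    Step (.app (.lam B ((H.shift 1 0).replace (G.shift 1 0) (.var 0))) G) H := by
  have hsubst : subst 0 G ((H.shift 1 0).replace (G.shift 1 0) (.var 0)) = H := by
    rw [hG 1 0, hG.subst_replace_var, subst_shift]
  simpa only [hsubst] using
    Step.beta (A := B) (b := (H.shift 1 0).replace (G.shift 1 0) (.var 0)) (x := G)

theorem invL_complete_case_010_general {B : Ty}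
    (hG : HasType [] G B) (hGnf : G.IsNormal) (hGlam : ∀ T b, G ≠ .lam T b)
    (hFlamI : F.lamI = true) (hFnf : F.IsNormal) (heq : NormalizesTo (.app F G) H) :
    ∃ F', InvL H G F' ∧ NormalizesTo (.app F' G) H :=
  have hocc : Occurs G H := heq.occurs_arg hFlamI hFnf hG.isClosed hGnf hGlam
  ⟨_, .case2 H G B hocc hG, .single (hG.isClosed.step_app_lam_replace H B), heq.2⟩

end InverseL

/-- **Case `(0,1,0)` of `Inverse_L` completeness.**  For typed ASP λ-calculus formulas
`H` and `G` in β-normal form where `H` has order 0 and `G` has order 0, if there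
exists a typed ASP λ-calculus formula `F` of order 1 in β-normal form with
`H = F @ G`, then `Inverse_L(H,G)` returns a non-null formula `F'` with `H = F' @ G`. -/
theorem invL_complete_case_010 (H G : Tm) (A B : Ty)
    (hH : IsFormula H A) (hG : IsFormula G B)
    (hHnf : H.IsNormal) (hGnf : G.IsNormal)
    (hHo : A.order = 0) (hGo : B.order = 0)
    (F : Tm) (C : Ty) (hF : IsFormula F C) (hFo : C.order = 1) (hFnf : F.IsNormal)
    (heq : NormalizesTo (Tm.app F G) H) :
    ∃ F', InvL H G F' ∧ NormalizesTo (Tm.app F' G) H := by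
  exact invL_complete_case_010_general hG.typed hGnf (hG.typed.ne_lam_of_order_eq_zero hGo)
    hF.lamI hFnf heq

end ASPLambda
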